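/- The series ∑_{n=0}^∞ ((1)_n^2 / ((7/6)_n (11/6)_n)) · ((22n+21)/(2n+1)) · (16/27)^n converges and equals 30·G, where G is Catalan's constant. -/

import Mathlib

noncomputable def poch (x : ℝ) (n : ℕ) : ℝ := ∏ i ∈ Finset.range n, (x + i)

/-- Catalan's constant. -/
noncomputable def catalanG : ℝ := ∑' k : ℕ, (-1 : ℝ) ^ k / (2 * (k : ℝ) + 1) ^ 2

open Filter Topology

/-- General limit argument for a WZ pair. -/
lemma wz_limit (F G : ℕ → ℕ → ℝ) (L : ℝ) (e : ℕ → ℝ)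
    (hwz : ∀ n k, F (n + 1) k - F n k = G n (k + 1) - G n k)
    (hG : ∀ n, Tendsto (fun K => G n K) atTop (𝓝 0))
    (h0 : Tendsto (fun K => ∑ k ∈ Finset.range K, F 0 k) atTop (𝓝 L))
    (hF : ∀ᶠ N in atTop, ∀ K, |∑ k ∈ Finset.range K, F N k| ≤ e N)
    (he : Tendsto e atTop (𝓝 0)) :
    Tendsto (fun N => ∑ n ∈ Finset.range N, G n 0) atTop (𝓝 L) := by
  have key : ∀ N K, ∑ n ∈ Finset.range N, G n 0 =
      ∑ k ∈ Finset.range K, F 0 k + ∑ n ∈ Finset.range N, G n K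
        - ∑ k ∈ Finset.range K, F N k := by
    intro N K
    induction N with
    | zero => simp
    | succ N ih =>
      have h1 : ∑ k ∈ Finset.range K, (F (N + 1) k - F N k) = G N K - G N 0 := by
        rw [← Finset.sum_range_sub (fun k => G N k)]
        exact Finset.sum_congr rfl (fun k _ => hwz N k)
      rw [Finset.sum_sub_distrib] at h1
      rw [Finset.sum_range_succ, Finset.sum_range_succ, ih]
      linarith
  rw [tendsto_iff_norm_sub_tendsto_zero]
  refine squeeze_zero' (Eventually.of_forall fun _ => norm_nonneg _) ?_ he
  filter_upwards [hF] with N hN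
  have hlim : Tendsto (fun K => ∑ k ∈ Finset.range K, F 0 k + ∑ n ∈ Finset.range N, G n K)
      atTop (𝓝 (L + ∑ n ∈ Finset.range N, (0 : ℝ))) :=
    h0.add (tendsto_finsetSum _ (fun n _ => hG n))
  simp only [Finset.sum_const_zero, add_zero] at hlim
  have hlim2 := (tendsto_const_nhds (x := ∑ n ∈ Finset.range N, G n 0)).sub hlim
  refine le_of_tendsto hlim2.norm (Eventually.of_forall fun K => ?_)
  have := key N K
  rw [Real.norm_eq_abs]
  have h2 : ∑ n ∈ Finset.range N, G n 0 -
      (∑ k ∈ Finset.range K, F 0 k + ∑ n ∈ Finset.range N, G n K)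
      = - ∑ k ∈ Finset.range K, F N k := by linarith
  rw [h2, abs_neg]
  exact hN K

/-- `u x n = n! / (x)_{n+1}`. -/
noncomputable def uu (x : ℝ) : ℕ → ℝ
  | 0 => 1 / x
  | n + 1 => uu x n * (n + 1) / (x + n + 1)

lemma uu_pos (x : ℝ) (hx : 0 < x) (n : ℕ) : 0 < uu x n := by
  induction n with
  | zero => simp [uu, hx]
  | succ n ih => rw [uu]; positivity

lemma uu_shift (x : ℝ) (hx : 0 < x) (n : ℕ) : uu (x + 1) n = uu x n * x / (x + n + 1) := by
  induction n with
  | zero => simp [uu]; field_simp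
  | succ n ih =>
    rw [uu, uu, ih]
    push_cast
    have h1 : x + n + 1 ≠ 0 := by positivity
    have h2 : x + (n + 1) + 1 ≠ 0 := by positivity
    have h3 : x + 1 + n + 1 ≠ 0 := by positivity
    field_simp
    ring

/-- w_n -/
lemma uu_half_sq (n : ℕ) : uu (1/2) n ^ 2 ≤ 4 / (n + 1) := by
  induction n with
  | zero => simp [uu]; norm_num
  | succ n ih =>
    rw [uu]
    push_cast
    have : (uu (1/2) n * (n + 1) / (1/2 + n + 1)) ^ 2
        = uu (1/2) n ^ 2 * ((n + 1) / (1/2 + n + 1)) ^ 2 := by ring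
    rw [this]
    calc uu (1/2) n ^ 2 * (((n : ℝ) + 1) / (1/2 + n + 1)) ^ 2
        ≤ 4 / (n + 1) * (((n : ℝ) + 1) / (1/2 + n + 1)) ^ 2 := by gcongr
      _ ≤ _ := by
        have h0 : (0 : ℝ) ≤ n := Nat.cast_nonneg n
        rw [div_pow, div_mul_div_comm, div_le_div_iff₀ (by positivity) (by positivity)]
        nlinarith [mul_nonneg h0 h0, mul_nonneg h0 (mul_nonneg h0 h0)]

lemma uu_half_tendsto : Tendsto (fun n => uu (1/2) n) atTop (𝓝 0) := by
  have h : Tendsto (fun n : ℕ => uu (1/2) n ^ 2) atTop (𝓝 0) := by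
    refine squeeze_zero (fun _ => sq_nonneg _) uu_half_sq ?_
    have := tendsto_one_div_add_atTop_nhds_zero_nat (𝕜 := ℝ)
    have h4 := this.const_mul 4
    simpa [mul_div_assoc', div_eq_mul_inv] using h4
  have h2 := h.sqrt
  simp only [Real.sqrt_zero] at h2
  refine h2.congr fun n => Real.sqrt_sq (uu_pos _ (by norm_num) n).le

lemma uu_le (x : ℝ) (hx : 1/2 ≤ x) (n : ℕ) : uu x n ≤ uu (1/2) n / (2 * x) := by
  have hx0 : 0 < x := by linarith
  induction n with
  | zero => simp [uu]; field_simp; norm_num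
  | succ n ih =>
    rw [uu, uu]
    have hp := uu_pos (1/2) (by norm_num) n
    have hq := uu_pos x hx0 n
    calc uu x n * (n + 1) / (x + n + 1)
        ≤ (uu (1/2) n / (2 * x)) * (n + 1) / (1/2 + n + 1) := by gcongr
      _ = _ := by ring

lemma uu_le_one_div (x : ℝ) (hx : 0 < x) (n : ℕ) : uu x n ≤ 1 / x := by
  induction n with
  | zero => simp [uu]
  | succ n ih =>
    rw [uu]
    refine le_trans ?_ ih
    have hq := uu_pos x hx n
    rw [div_le_iff₀ (by positivity)]
    nlinarith

noncomputable def FA (n k : ℕ) : ℝ :=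
  (-1) ^ k * uu (k + 1/2) n * (1 / (k + 1/2) + 1 / (n + (k + 1/2)))

noncomputable def GA (n k : ℕ) : ℝ := (-1) ^ k * uu (k + 1/2) n / (n + (k + 1/2))

lemma wzA (n k : ℕ) : FA (n + 1) k - FA n k = GA n (k + 1) - GA n k := by
  unfold FA GA
  have hx : (0 : ℝ) < k + 1/2 := by positivity
  have e : ((k + 1 : ℕ) : ℝ) + 1/2 = (k + 1/2) + 1 := by push_cast; ring
  rw [e, uu_shift _ hx, uu]
  generalize (k : ℝ) + 1/2 = x at *
  push_cast
  have h1 : x + n + 1 ≠ 0 := by positivity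
  have h2 : (n : ℝ) + 1 + x ≠ 0 := by positivity
  have h3 : (n : ℝ) + (x + 1) ≠ 0 := by positivity
  have h4 : (n : ℝ) + x ≠ 0 := by positivity
  rw [pow_succ]
  field_simp
  ring

lemma summable_x : Summable (fun k : ℕ => 1 / ((k : ℝ) + 1/2) ^ 2) := by
  have h := (summable_nat_add_iff 1).mpr (Real.summable_one_div_nat_pow.mpr (by norm_num : 1 < 2))
  refine Summable.of_nonneg_of_le (fun _ => by positivity) (fun k => ?_) (h.mul_left 4)
  push_cast
  rw [mul_one_div, div_le_div_iff₀ (by positivity) (by positivity)]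
  have h0 : (0 : ℝ) ≤ k := Nat.cast_nonneg k
  nlinarith

lemma tendsto_inv_half : Tendsto (fun k : ℕ => 1 / ((k : ℝ) + 1/2)) atTop (𝓝 0) := by
  simp only [one_div]
  exact tendsto_inv_atTop_zero.comp
    (tendsto_atTop_add_const_right _ _ tendsto_natCast_atTop_atTop)

lemma stepA : Tendsto (fun N => ∑ n ∈ Finset.range N, GA n 0) atTop (𝓝 (8 * catalanG)) := by
  refine wz_limit FA GA _ (fun N => uu (1/2) N * ∑' k : ℕ, 1 / ((k : ℝ) + 1/2) ^ 2) wzA ?_ ?_ ?_ ?_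
  · intro n
    rw [tendsto_zero_iff_abs_tendsto_zero]
    have h := tendsto_inv_half.mul tendsto_inv_half
    rw [mul_zero] at h
    refine squeeze_zero (fun _ => abs_nonneg _) (fun k => ?_) h
    simp only [Function.comp, GA]
    have hx : (0 : ℝ) < k + 1/2 := by positivity
    have hu := uu_pos _ hx n
    rw [abs_div, abs_mul, abs_pow, abs_neg, abs_one, one_pow, one_mul, abs_of_pos hu,
      abs_of_pos (by positivity), div_eq_mul_one_div]
    have := uu_le_one_div _ hx n
    have h2 : 1 / ((n : ℝ) + (k + 1/2)) ≤ 1 / ((k : ℝ) + 1/2) :=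
      one_div_le_one_div_of_le hx (by linarith [(Nat.cast_nonneg n : (0 : ℝ) ≤ n)])
    exact mul_le_mul this h2 (by positivity) (by positivity)
  · have hs : Summable (fun k : ℕ => (-1 : ℝ) ^ k / (2 * (k : ℝ) + 1) ^ 2) := by
      refine Summable.of_norm_bounded summable_x (fun k => ?_)
      rw [norm_div, norm_pow, norm_neg, norm_one, one_pow, Real.norm_of_nonneg (by positivity)]
      gcongr
      linarith [(Nat.cast_nonneg k : (0 : ℝ) ≤ k)]
      norm_num
    have h := (hs.hasSum.mul_left 8).tendsto_sum_nat
    refine h.congr fun K => Finset.sum_congr rfl fun k _ => ?_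
    simp only [FA, uu]
    push_cast
    have hx : (2 * (k : ℝ) + 1) ≠ 0 := by positivity
    have hx' : ((k : ℝ) + 1/2) ≠ 0 := by positivity
    have : (2 * (k : ℝ) + 1) = 2 * (k + 1/2) := by ring
    rw [this, zero_add]
    field_simp
    ring
  · refine Eventually.of_forall fun N K => ?_
    refine (Finset.abs_sum_le_sum_abs _ _).trans ?_
    have hb : ∀ k : ℕ, |FA N k| ≤ uu (1/2) N * (1 / ((k : ℝ) + 1/2) ^ 2) := by
      intro k
      have hx : (0 : ℝ) < k + 1/2 := by positivity
      have hu := uu_pos _ hx N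
      have hl := uu_le ((k : ℝ) + 1/2) (by linarith [(Nat.cast_nonneg k : (0 : ℝ) ≤ k)]) N
      rw [FA, abs_mul, abs_mul, abs_pow, abs_neg, abs_one, one_pow, one_mul, abs_of_pos hu,
        abs_of_pos (by positivity)]
      have h2 : 1 / ((N : ℝ) + (k + 1/2)) ≤ 1 / ((k : ℝ) + 1/2) :=
        one_div_le_one_div_of_le hx (by linarith [(Nat.cast_nonneg N : (0 : ℝ) ≤ N)])
      have hw := uu_pos (1/2) (by norm_num) N
      calc uu (k + 1/2) N * (1 / ((k : ℝ) + 1/2) + 1 / (N + (k + 1/2)))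
          ≤ (uu (1/2) N / (2 * (k + 1/2))) * (1 / ((k : ℝ) + 1/2) + 1 / (k + 1/2)) := by
            gcongr
        _ = _ := by field_simp; ring
    calc _ ≤ ∑ k ∈ Finset.range K, uu (1/2) N * (1 / ((k : ℝ) + 1/2) ^ 2) :=
          Finset.sum_le_sum fun k _ => hb k
      _ = uu (1/2) N * ∑ k ∈ Finset.range K, (1 / ((k : ℝ) + 1/2) ^ 2) := by
          rw [Finset.mul_sum]
      _ ≤ _ := by
          have hw := uu_pos (1/2) (by norm_num) N
          have := summable_x.sum_le_tsum (Finset.range K) (fun _ _ => by positivity)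
          gcongr
  · have h := uu_half_tendsto.mul_const (∑' k : ℕ, 1 / ((k : ℝ) + 1/2) ^ 2)
    rw [zero_mul] at h
    exact h

noncomputable def DD (n : ℝ) : ℝ := (3 * n + 1/2) * (3 * n + 3/2) * (3 * n + 5/2)

noncomputable def CC (n : ℝ) : ℝ := (n + 1/2) ^ 2 * ((2 * n + 1) * (2 * n + 2)) ^ 2 / DD n

noncomputable def PP (n y : ℝ) : ℝ :=
  (15/4 + 12 * n + 9 * n ^ 2) * y ^ 2 + (-5/2 - 11/2 * n + 2 * n ^ 2 + 6 * n ^ 3) * y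
    + (-1 - 19/2 * n - 109/4 * n ^ 2 - 30 * n ^ 3 - 11 * n ^ 4)

noncomputable def ss : ℕ → ℝ
  | 0 => 1
  | n + 1 => - ss n * CC n

noncomputable def qq (y : ℝ) : ℕ → ℝ
  | 0 => 1
  | n + 1 => qq y n * ((y + n + 1) ^ 2 * (y - n - 1))

lemma qq_shift (y : ℝ) (n : ℕ) :
    qq (y + 1) n * ((y + 1) ^ 2 * (y - n)) = qq y n * ((y + n + 1) ^ 2 * y) := by
  induction n with
  | zero => simp [qq]
  | succ n ih =>
    rw [qq, qq]
    push_cast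
    linear_combination (y + n + 2) ^ 2 * (y - n - 1) * ih

lemma half_abs (k m : ℕ) : 1/2 ≤ |(k : ℝ) + 1/2 - m| := by
  rcases le_or_gt m k with h | h
  · have : (m : ℝ) ≤ k := by exact_mod_cast h
    rw [le_abs]; left; linarith
  · have : (k : ℝ) + 1 ≤ m := by exact_mod_cast h
    rw [le_abs]; right; linarith

lemma half_ne (k m : ℕ) : (k : ℝ) + 1/2 - m ≠ 0 := by
  have := half_abs k m
  intro h
  rw [h] at this
  norm_num at this

lemma half_ne' (k m : ℕ) : (k : ℝ) + 1/2 - m - 1 ≠ 0 := by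
  have := half_ne k (m + 1)
  push_cast at this
  rwa [← sub_sub] at this

lemma qq_abs (k n : ℕ) : 1 ≤ |qq ((k : ℝ) + 1/2) n| := by
  induction n with
  | zero => simp [qq]
  | succ n ih =>
    rw [qq, abs_mul]
    refine one_le_mul_of_one_le_of_one_le ih ?_
    rw [abs_mul]
    have h1 := half_abs k (n + 1)
    push_cast at h1
    rw [← sub_sub] at h1
    have h2 : (9/4 : ℝ) ≤ |((k : ℝ) + 1/2 + n + 1) ^ 2| := by
      rw [abs_of_nonneg (sq_nonneg _)]
      have h0 : (0 : ℝ) ≤ k := Nat.cast_nonneg k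
      have h0' : (0 : ℝ) ≤ n := Nat.cast_nonneg n
      nlinarith
    nlinarith

lemma qq_ne (k n : ℕ) : qq ((k : ℝ) + 1/2) n ≠ 0 := by
  intro h
  have := qq_abs k n
  rw [h] at this
  norm_num at this

noncomputable def FB (n k : ℕ) : ℝ := ss n * uu (1/2) k / ((k + 1/2) * qq (k + 1/2) n)

noncomputable def GB (n k : ℕ) : ℝ := FB n k * (PP n (k + 1/2) / (DD n * ((k + 1/2) - n - 1)))

lemma DD_pos (n : ℕ) : 0 < DD n := by unfold DD; positivity

lemma FB_succ_k (n k : ℕ) :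
    FB n (k + 1) = FB n k * ((k + 1) * ((k + 1/2) - n) / ((k + 1/2) + n + 1) ^ 2) := by
  unfold FB
  have e : ((k + 1 : ℕ) : ℝ) + 1/2 = (k + 1/2) + 1 := by push_cast; ring
  have hq := qq_shift ((k : ℝ) + 1/2) n
  have hq1 := qq_ne k n
  have hq2 := qq_ne (k + 1) n
  rw [e] at *
  rw [uu]
  have hy := half_ne k n
  have hx : (0 : ℝ) < k + 1/2 := by positivity
  have e2 : (1/2 : ℝ) + k + 1 = (k + 1/2) + 1 := by ring
  rw [e2]
  generalize (k : ℝ) + 1/2 = y at *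
  have h1 : y + 1 ≠ 0 := by positivity
  have h2 : y + n + 1 ≠ 0 := by positivity
  have h3 := hx.ne'
  rw [← mul_div_assoc, div_mul_div_comm, div_div, div_eq_div_iff (by positivity) (by positivity)]
  linear_combination (-ss n * uu (1/2) k * (k + 1)) * hq

lemma FB_succ_n (n k : ℕ) :
    FB (n + 1) k = FB n k * (- CC n / (((k + 1/2) + n + 1) ^ 2 * ((k + 1/2) - n - 1))) := by
  unfold FB
  rw [ss, qq]
  have hq1 := qq_ne k n
  have h1 := half_ne' k n
  have hx : (0 : ℝ) < k + 1/2 := by positivity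
  generalize (k : ℝ) + 1/2 = y at *
  have h2 : y + n + 1 ≠ 0 := by positivity
  field_simp

lemma wzB (n k : ℕ) : FB (n + 1) k - FB n k = GB n (k + 1) - GB n k := by
  unfold GB
  rw [FB_succ_k, FB_succ_n]
  have e : ((k + 1 : ℕ) : ℝ) + 1/2 = (k + 1/2) + 1 := by push_cast; ring
  have e2 : (k : ℝ) + 1 = (k + 1/2) + 1/2 := by ring
  rw [e, e2]
  have h1 := half_ne' k n
  have h3 := half_ne k n
  have hx : (0 : ℝ) < k + 1/2 := by positivity
  generalize (k : ℝ) + 1/2 = y at *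
  have h2 : y + n + 1 ≠ 0 := by positivity
  have hD := (DD_pos n).ne'
  have e3 : y + 1 - n - 1 = y - n := by ring
  rw [e3]
  generalize FB n k = f
  unfold CC
  have hid : -((n + 1/2) ^ 2 * ((2 * (n : ℝ) + 1) * (2 * n + 2)) ^ 2)
      - DD n * ((y + n + 1) ^ 2 * (y - n - 1))
      = PP n (y + 1) * (y + 1/2) * (y - n - 1) - PP n y * (y + n + 1) ^ 2 := by
    unfold DD PP; ring
  have hl : -((n + 1/2) ^ 2 * ((2 * (n : ℝ) + 1) * (2 * n + 2)) ^ 2 / DD n)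
      / ((y + n + 1) ^ 2 * (y - n - 1)) - 1
      = (-((n + 1/2) ^ 2 * ((2 * (n : ℝ) + 1) * (2 * n + 2)) ^ 2)
      - DD n * ((y + n + 1) ^ 2 * (y - n - 1))) / (DD n * ((y + n + 1) ^ 2 * (y - n - 1))) := by
    field_simp
  have hr : (y + 1/2) * (y - n) / (y + n + 1) ^ 2 * (PP n (y + 1) / (DD n * (y - n)))
      - PP n y / (DD n * (y - n - 1))
      = (PP n (y + 1) * (y + 1/2) * (y - n - 1) - PP n y * (y + n + 1) ^ 2)
        / (DD n * ((y + n + 1) ^ 2 * (y - n - 1))) := by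
    field_simp
  have : ∀ a b c d : ℝ, a - 1 = c * b - d → f * a - f = f * c * b - f * d := by
    intro a b c d h
    linear_combination f * h
  apply this
  rw [hl, hr, hid]

lemma GB_tendsto (n : ℕ) : Tendsto (fun K => GB n K) atTop (𝓝 0) := by
  rw [tendsto_zero_iff_abs_tendsto_zero]
  obtain ⟨M, hM0, hM⟩ : ∃ M : ℝ, 0 ≤ M ∧ ∀ y : ℝ, 1/2 ≤ y → |PP n y| ≤ M * y ^ 2 := by
    refine ⟨|15/4 + 12 * (n : ℝ) + 9 * n ^ 2|
      + 2 * |-5/2 - 11/2 * (n : ℝ) + 2 * n ^ 2 + 6 * n ^ 3|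
      + 4 * |-1 - 19/2 * (n : ℝ) - 109/4 * n ^ 2 - 30 * n ^ 3 - 11 * n ^ 4|, by positivity, ?_⟩
    intro y hy
    unfold PP
    generalize 15/4 + 12 * (n : ℝ) + 9 * n ^ 2 = a
    generalize -5/2 - 11/2 * (n : ℝ) + 2 * n ^ 2 + 6 * n ^ 3 = b
    generalize -1 - 19/2 * (n : ℝ) - 109/4 * n ^ 2 - 30 * n ^ 3 - 11 * n ^ 4 = c
    have h1 : |a * y ^ 2 + b * y + c| ≤ |a| * y ^ 2 + |b| * y + |c| := by
      refine (abs_add_three _ _ _).trans ?_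
      rw [abs_mul, abs_mul, abs_of_nonneg (sq_nonneg y), abs_of_nonneg (by linarith : 0 ≤ y)]
    have h2 : |b| * y ≤ |b| * (2 * y ^ 2) := by gcongr; nlinarith
    have h3 : |c| * 1 ≤ |c| * (4 * y ^ 2) := by gcongr; nlinarith
    linarith
  have hlim := uu_half_tendsto.const_mul (|ss n| * M * (2 * n + 3) / DD n)
  rw [mul_zero] at hlim
  refine squeeze_zero (fun _ => abs_nonneg _) (fun k => ?_) hlim
  simp only [Function.comp, GB, FB]
  have hw := uu_pos (1/2) (by norm_num) k
  have hq := qq_abs k n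
  have hy : (1/2 : ℝ) ≤ k + 1/2 := by linarith [(Nat.cast_nonneg k : (0 : ℝ) ≤ k)]
  have hP := hM _ hy
  have h1 := half_abs k (n + 1)
  push_cast at h1
  rw [← sub_sub] at h1
  generalize (k : ℝ) + 1/2 = y at *
  have hD := DD_pos n
  have hy0 : 0 < y := by linarith
  have h2 : y ≤ (2 * n + 3) * |y - n - 1| := by
    have h3 := le_abs_self (y - n - 1)
    have h0' : (0 : ℝ) ≤ n := Nat.cast_nonneg n
    nlinarith
  rw [abs_mul, abs_div, abs_div, abs_mul, abs_mul, abs_mul, abs_of_pos hw, abs_of_pos hy0,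
    abs_of_pos hD]
  generalize |y - n - 1| = z at *
  generalize |qq y n| = q at *
  have hz : 0 < z := by linarith
  have hq0 : 0 < q := by linarith
  calc |ss n| * uu (1/2) k / (y * q) * (|PP n y| / (DD n * z))
      ≤ |ss n| * uu (1/2) k / (y * 1) * (M * y ^ 2 / (DD n * z)) := by gcongr
    _ = |ss n| * M * uu (1/2) k / DD n * (y / z) := by field_simp
    _ ≤ |ss n| * M * uu (1/2) k / DD n * (2 * n + 3) := by
        gcongr
        rw [div_le_iff₀ hz]; exact h2
    _ = _ := by ring

lemma FB_le (n : ℕ) (hn : 2 ≤ n) (k : ℕ) :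
    |FB n k| ≤ |FB n 0| * (2 / ((k + 1) * (k + 2))) := by
  have hn' : (2 : ℝ) ≤ n := by exact_mod_cast hn
  induction k with
  | zero => simp
  | succ k ih =>
    rw [FB_succ_k, abs_mul]
    have h0 : (0 : ℝ) ≤ k := Nat.cast_nonneg k
    have h1 : |((k : ℝ) + 1) * ((k + 1/2) - n) / ((k + 1/2) + (n : ℝ) + 1) ^ 2|
        ≤ ((k : ℝ) + 1) / (k + 3) := by
      rw [abs_div, abs_mul, abs_of_nonneg (by positivity : (0 : ℝ) ≤ (k : ℝ) + 1),
        abs_of_nonneg (sq_nonneg ((k + 1/2) + (n : ℝ) + 1))]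
      have h2 : |(k + 1/2 : ℝ) - n| ≤ k + 1/2 + n + 1 := by
        rw [abs_le]; constructor <;> linarith
      have h3 : (k : ℝ) + 3 ≤ k + 1/2 + n + 1 := by linarith
      calc _ ≤ ((k : ℝ) + 1) * (k + 1/2 + n + 1) / ((k + 1/2) + (n : ℝ) + 1) ^ 2 := by gcongr
        _ = ((k : ℝ) + 1) / ((k + 1/2) + (n : ℝ) + 1) := by field_simp
        _ ≤ _ := by gcongr
    calc _ ≤ |FB n 0| * (2 / ((k + 1) * (k + 2))) * ((k + 1) / (k + 3)) := by gcongr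
      _ = _ := by
        push_cast
        have : (k : ℝ) + 1 + 2 = k + 3 := by ring
        have h' : (k : ℝ) + 1 + 1 = k + 2 := by ring
        rw [this, h']
        field_simp

lemma FB_sum_le (n : ℕ) (hn : 2 ≤ n) (K : ℕ) :
    |∑ k ∈ Finset.range K, FB n k| ≤ 2 * |FB n 0| := by
  have hs : ∀ K : ℕ, ∑ k ∈ Finset.range K, (2 / (((k : ℝ) + 1) * (k + 2))) = 2 - 2 / (K + 1) := by
    intro K
    induction K with
    | zero => simp
    | succ K ih =>
      rw [Finset.sum_range_succ, ih]
      push_cast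
      field_simp
      ring
  refine (Finset.abs_sum_le_sum_abs _ _).trans ?_
  refine (Finset.sum_le_sum fun k _ => FB_le n hn k).trans ?_
  rw [← Finset.mul_sum, hs, mul_comm]
  gcongr
  have : (0 : ℝ) ≤ 2 / (K + 1) := by positivity
  linarith

lemma FB_zero_succ (n : ℕ) : FB (n + 1) 0 = FB n 0 *
    (16 * (n + 1/2) ^ 3 * (n + 1) ^ 2 / ((n + 3/2) ^ 2 * DD n)) := by
  rw [FB_succ_n]
  congr 1
  unfold CC
  have hD := DD_pos n
  have e1 : ((0 : ℕ) : ℝ) + 1/2 - n - 1 = -(n + 1/2) := by push_cast; ring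
  have e2 : ((0 : ℕ) : ℝ) + 1/2 + n + 1 = n + 3/2 := by push_cast; ring
  rw [e1, e2]
  have : (n : ℝ) + 1/2 ≠ 0 := by positivity
  have : (n : ℝ) + 3/2 ≠ 0 := by positivity
  rw [mul_neg, neg_div_neg_eq, div_div, div_eq_div_iff (by positivity) (by positivity)]
  ring

lemma FB_zero_bound (n : ℕ) : |FB n 0| ≤ 4 * (3/4) ^ n := by
  induction n with
  | zero => simp [FB, ss, qq, uu]; norm_num
  | succ n ih =>
    rw [FB_zero_succ, abs_mul, pow_succ (3/4 : ℝ) n, ← mul_assoc]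
    have hD := DD_pos n
    have : |16 * ((n : ℝ) + 1/2) ^ 3 * (n + 1) ^ 2 / ((n + 3/2) ^ 2 * DD n)| ≤ 3/4 := by
      rw [abs_of_nonneg (by positivity), div_le_iff₀ (by positivity)]
      unfold DD
      rw [← sub_nonneg]
      ring_nf
      positivity
    exact mul_le_mul ih this (abs_nonneg _) (by positivity)

lemma poch_succ (x : ℝ) (n : ℕ) : poch x (n + 1) = poch x n * (x + n) := by
  simp [poch, Finset.prod_range_succ]

lemma poch_pos (x : ℝ) (hx : 0 < x) (n : ℕ) : 0 < poch x n :=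
  Finset.prod_pos fun i _ => by positivity

/-- closed form of FB n 0 -/
lemma FB_zero_eq (n : ℕ) : FB n 0 * ((2 * n + 1) ^ 2 * 5 / (144 * ((n + 5/6) * (n + 1/6)))) =
    1 * (poch 1 n ^ 2 / (poch (7/6) n * poch (11/6) n) * (16/27 : ℝ) ^ n) := by
  induction n with
  | zero => simp [FB, ss, qq, uu, poch]; norm_num
  | succ n ih =>
    rw [FB_zero_succ, poch_succ, poch_succ, poch_succ]
    have h1 := poch_pos (7/6) (by norm_num) n
    have h2 := poch_pos (11/6) (by norm_num) n
    have e : 1 * ((poch 1 n * (1 + n)) ^ 2 / (poch (7/6) n * (7/6 + n) *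
        (poch (11/6) n * (11/6 + n))) * (16/27 : ℝ) ^ (n + 1))
        = 1 * (poch 1 n ^ 2 / (poch (7/6) n * poch (11/6) n) * (16/27 : ℝ) ^ n) *
          ((1 + n) ^ 2 / ((7/6 + n) * (11/6 + n)) * (16/27)) := by
      rw [pow_succ (16/27 : ℝ) n]
      generalize (16/27 : ℝ) ^ n = t
      field_simp
    rw [e, ← ih]
    push_cast
    unfold DD
    field_simp
    ring

lemma GB_zero_eq (n : ℕ) : GB n 0 = 4/15 * (poch 1 n ^ 2 / (poch (7/6) n * poch (11/6) n) *
        ((22 * (n : ℝ) + 21) / (2 * n + 1)) * (16/27 : ℝ) ^ n) := by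
  have h := FB_zero_eq n
  have e : poch 1 n ^ 2 / (poch (7/6) n * poch (11/6) n) *
        ((22 * (n : ℝ) + 21) / (2 * n + 1)) * (16/27 : ℝ) ^ n
      = 1 * (1 * (poch 1 n ^ 2 / (poch (7/6) n * poch (11/6) n) * (16/27 : ℝ) ^ n)) *
        ((22 * (n : ℝ) + 21) / (2 * n + 1)) := by ring
  rw [e, ← h, GB]
  have hD := DD_pos n
  have e1 : ((0 : ℕ) : ℝ) + 1/2 - n - 1 = -(n + 1/2) := by push_cast; ring
  rw [e1]
  have h1 : PP n (((0 : ℕ) : ℝ) + 1/2) / (DD n * -((n : ℝ) + 1/2))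
      = 4/15 * ((2 * n + 1) ^ 2 * 5 / (144 * ((n + 5/6) * (n + 1/6))))
        * ((22 * (n : ℝ) + 21) / (2 * n + 1)) := by
    unfold PP DD
    push_cast
    rw [mul_neg, div_neg]
    field_simp
    ring
  rw [h1]
  ring

theorem stmt2 :
    HasSum (fun n : ℕ =>
      poch 1 n ^ 2 / (poch (7/6) n * poch (11/6) n) *
        ((22 * (n : ℝ) + 21) / (2 * n + 1)) * (16/27 : ℝ) ^ n)
      (30 * catalanG) := by
  rw [hasSum_iff_tendsto_nat_of_nonneg]
  · have hB : Tendsto (fun N => ∑ n ∈ Finset.range N, GB n 0) atTop (𝓝 (8 * catalanG)) := by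
      refine wz_limit FB GB _ (fun N => 2 * |FB N 0|) wzB GB_tendsto ?_ ?_ ?_
      · refine stepA.congr fun K => Finset.sum_congr rfl fun k _ => ?_
        simp [GA, FB, ss, qq]
      · filter_upwards [eventually_ge_atTop 2] with N hN K
        exact FB_sum_le N hN K
      · have h := (tendsto_pow_atTop_nhds_zero_of_lt_one (r := (3/4 : ℝ))
          (by norm_num) (by norm_num)).const_mul (2 * 4)
        rw [mul_zero] at h
        refine squeeze_zero (fun _ => by positivity) (fun n => ?_) h
        have := FB_zero_bound n
        linarith
    have h := hB.const_mul (15/4)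
    have e : 15/4 * (8 * catalanG) = 30 * catalanG := by ring
    rw [e] at h
    refine h.congr fun N => ?_
    rw [Finset.mul_sum]
    refine Finset.sum_congr rfl fun n _ => ?_
    rw [GB_zero_eq]
    ring
  · intro n
    have h1 := poch_pos (7/6) (by norm_num) n
    have h2 := poch_pos (11/6) (by norm_num) n
    positivity
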